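/- Let n ≥ 2 and q ≥ 1 be integers and γ ∈ (0,1]. For t = 0, 1, …, n+q−3 define the q×q real matrix A(t) = I_q − (1−γ)·Σ_{j=1}^{q} χ(j−1 ≤ t ≤ n+j−3)·e_j(e_j − e_{j−1})ᵀ, where e_1,…,e_q is the standard basis of ℝ^q, e_0 = 0 by convention, and χ(·) ∈ {0,1} is the indicator of the stated condition on t. Then the q-th row sum of the ordered product A(n+q−3)·A(n+q−4)···A(1)·A(0) equals γ^{n−1}·Σ_{i=0}^{q−1} (1−γ)^i·C(n+i−2, n−2), where C(a,b) denotes the binomial coefficient. -/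

import Mathlib

/-- The standard basis vectors of `ℝ^q`, numbered `1, …, q` (with `e 0 = 0` and
`e j = 0` for `j > q` by convention). -/
noncomputable def eVec (q : ℕ) (j : ℕ) : Fin q → ℝ :=
  if h : 1 ≤ j ∧ j ≤ q then Pi.single (⟨j - 1, by omega⟩ : Fin q) 1 else 0

/-- The matrix `A(t) = I_q - (1-γ) Σ_{j=1}^{q} χ(j-1 ≤ t ≤ n+j-3) e_j (e_j - e_{j-1})ᵀ`. -/
noncomputable def Amat (n q : ℕ) (γ : ℝ) (t : ℕ) : Matrix (Fin q) (Fin q) ℝ :=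
  1 - (1 - γ) • ∑ j ∈ Finset.Icc 1 q,
    (if j - 1 ≤ t ∧ t ≤ n + j - 3 then (1 : ℝ) else 0) •
      Matrix.vecMulVec (eVec q j) (eVec q j - eVec q (j - 1))

/-- The ordered (time-decreasing) product `A(T-1) ⬝ A(T-2) ⬝ ⋯ ⬝ A(0)`. -/
noncomputable def prodRev {q : ℕ} (A : ℕ → Matrix (Fin q) (Fin q) ℝ) :
    ℕ → Matrix (Fin q) (Fin q) ℝ
  | 0 => 1
  | t + 1 => A t * prodRev A t

lemma eVec_succ (q : ℕ) (k : Fin q) : eVec q (k + 1) = Pi.single k 1 := by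
  simp [eVec]

lemma eVec_apply {q j : ℕ} (hj : 1 ≤ j) (k : Fin q) :
    eVec q j k = if j = k + 1 then 1 else 0 := by
  unfold eVec
  split_ifs with h h' h'
  · subst h'
    simp
  · refine Pi.single_eq_of_ne ?_ _
    rw [Ne, Fin.ext_iff]
    dsimp only
    omega
  · omega
  · rfl

lemma Amat_mulVec_apply (n q : ℕ) (γ : ℝ) (t : ℕ) (v : Fin q → ℝ) (k : Fin q) :
    (Amat n q γ t).mulVec v k =
      v k - (1 - γ) * ((if (k : ℕ) ≤ t ∧ t ≤ n + (k + 1) - 3 then 1 else 0) *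
        (v k - eVec q k ⬝ᵥ v)) := by
  have hsum : (∑ j ∈ Finset.Icc 1 q, (if j - 1 ≤ t ∧ t ≤ n + j - 3 then (1 : ℝ) else 0) •
      Matrix.vecMulVec (eVec q j) (eVec q j - eVec q (j - 1))).mulVec v k =
      (if (k : ℕ) ≤ t ∧ t ≤ n + (k + 1) - 3 then 1 else 0) * (v k - eVec q k ⬝ᵥ v) := by
    rw [Matrix.sum_mulVec, Finset.sum_apply, Finset.sum_eq_single (k + 1 : ℕ)]
    · rw [Matrix.smul_mulVec, Matrix.vecMulVec_mulVec]
      simp [eVec_succ, sub_dotProduct]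
    · intro j hj hne
      rw [Matrix.smul_mulVec, Matrix.vecMulVec_mulVec]
      simp [eVec_apply (Finset.mem_Icc.1 hj).1, hne]
    · intro h
      exact absurd (Finset.mem_Icc.2 ⟨by omega, k.isLt⟩) h
  rw [Amat, Matrix.sub_mulVec, Matrix.smul_mulVec, Matrix.one_mulVec, Pi.sub_apply, Pi.smul_apply,
    hsum, smul_eq_mul]

/-- `∑_{i < k} p ^ i * multichoose s i`, a partial sum of the expansion of `(1 - p) ^ (-s)`. -/
noncomputable def multichooseSum (p : ℝ) (k s : ℕ) : ℝ :=
  ∑ i ∈ Finset.range k, p ^ i * (s.multichoose i : ℝ)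

lemma multichooseSum_succ_succ (p : ℝ) (k s : ℕ) :
    multichooseSum p (k + 1) (s + 1) =
      multichooseSum p (k + 1) s + p * multichooseSum p k (s + 1) := by
  simp only [multichooseSum, Finset.sum_range_succ', Nat.multichoose_succ_succ, Finset.mul_sum]
  rw [add_right_comm, ← Finset.sum_add_distrib]
  simp only [Nat.multichoose_zero_right]
  congr 1
  refine Finset.sum_congr rfl fun i _ => ?_
  push_cast
  ring

lemma multichooseSum_succ_zero (p : ℝ) (k : ℕ) : multichooseSum p (k + 1) 0 = 1 := by
  simp [multichooseSum, Finset.sum_range_succ']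

lemma prodRev_Amat_mulVec_one (n q : ℕ) (hn : 2 ≤ n) (γ : ℝ) (t : ℕ) (k : Fin q) :
    (prodRev (Amat n q γ) t).mulVec 1 k =
      γ ^ min (t - k) (n - 1) * multichooseSum (1 - γ) (k + 1) (min (t - k) (n - 1)) := by
  induction t generalizing k with
  | zero => simp [prodRev, multichooseSum_succ_zero]
  | succ t ih =>
    rw [prodRev, ← Matrix.mulVec_mulVec, Amat_mulVec_apply, ih]
    split_ifs with h
    · have hprev : eVec q k ⬝ᵥ (prodRev (Amat n q γ) t).mulVec 1 =
          γ ^ (t - k + 1) * multichooseSum (1 - γ) k (t - k + 1) := by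
        obtain ⟨k, hk⟩ := k
        cases k with
        | zero => simp [eVec, multichooseSum]
        | succ m =>
          have hs : min (t - m) (n - 1) = t - (m + 1) + 1 := by
            dsimp only at h
            omega
          have hm := ih ⟨m, by omega⟩
          rw [hs] at hm
          dsimp only
          rw [eVec_succ q ⟨m, by omega⟩, single_one_dotProduct, hm]
      rw [hprev, show min (t - k) (n - 1) = t - k by omega,
        show min (t + 1 - k) (n - 1) = t - k + 1 by omega, multichooseSum_succ_succ]
      ring
    · rw [show min (t + 1 - k) (n - 1) = min (t - k) (n - 1) by omega]
      ring

/-- The `q`-th row sum of the product `A(n+q-3)⋯A(0)` equals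
`γ^{n-1} Σ_{i=0}^{q-1} (1-γ)^i C(n+i-2, n-2)`. -/
theorem last_row_sum_of_A_product
    (n q : ℕ) (hn : 2 ≤ n) (hq : 1 ≤ q) (γ : ℝ) (hγ : γ ∈ Set.Ioc (0 : ℝ) 1) :
    ∑ i, prodRev (Amat n q γ) (n + q - 2) (⟨q - 1, by omega⟩ : Fin q) i =
      γ ^ (n - 1) *
        ∑ i ∈ Finset.range q, (1 - γ) ^ i * (Nat.choose (n + i - 2) (n - 2) : ℝ) := by
  have h := prodRev_Amat_mulVec_one n q hn γ (n + q - 2) ⟨q - 1, by omega⟩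
  simp only [Matrix.mulVec, dotProduct_one] at h
  rw [h, show min (n + q - 2 - (q - 1)) (n - 1) = n - 1 by omega, multichooseSum,
    Nat.sub_add_cancel hq]
  congr 1
  refine Finset.sum_congr rfl fun i _ => ?_
  rw [Nat.multichoose_eq, show n - 1 + i - 1 = n + i - 2 by omega,
    Nat.choose_symm_of_eq_add (show n + i - 2 = i + (n - 2) by omega)]
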